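/- arXiv:2102.07593 — 2 statements merged into one kernel-verified Lean document; each statement's English description precedes it below -/
import Mathlib

section
/- Fix m, n ≥ 1 and smooth real-valued functions ρ_a^μ, R^{a|μ}, f_{ab}^c, C_c^{ab} on ℝ^m (base indices μ, ν, λ in Fin m, fibre indices a, b, c, d, e in Fin n, repeated indices summed), with f_{ab}^c = −f_{ba}^c and C_c^{ab} = −C_c^{ba}. Assume the Lie bialgebroid constraints: (C1) ρ_a^λ ∂_λ ρ_b^μ − ρ_b^λ ∂_λ ρ_a^μ = ρ_c^μ f_{ab}^c; (C2) Alt_{abc}[ ρ_a^λ ∂_λ f_{bc}^d − f_{ea}^d f_{bc}^e ] = 0; (C3) R^{a|λ} ∂_λ R^{b|μ} − R^{b|λ} ∂_λ R^{a|μ} = R^{c|μ} C_c^{ab}; (C4) Alt^{abc}[ R^{a|λ} ∂_λ C_d^{bc} − C_d^{ea} C_e^{bc} ] = 0; (C5) R^{a|μ} ρ_a^ν + R^{a|ν} ρ_a^μ = 0; (C6) ρ_a^λ ∂_λ R^{b|μ} − R^{b|λ} ∂_λ ρ_a^μ = ρ_c^μ C_a^{bc} + R^{c|μ} f_{ca}^b;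 (C7) Alt_{ab}[ρ_a^λ ∂_λ C_b^{cd}] + Alt^{cd}[R^{c|λ} ∂_λ f_{ab}^d] + 2·Alt_{ab}Alt^{cd}[f_{ea}^c C_b^{de}] − (1/2) f_{ab}^e C_e^{cd} = 0. Define π^{μν} := Σ_a R^{a|μ} ρ_a^ν. Then π^{μν} = −π^{νμ}, and the bracket {f,g} := Σ π^{μν} ∂_μ f ∂_ν g on smooth functions is antisymmetric, a derivation in each argument, and satisfies the Jacobi identity {f,{g,h}} + {g,{h,f}} + {h,{f,g}} = 0; i.e. the base ℝ^m carries a canonical Poisson bracket. -/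
open scoped BigOperators

/-- Partial derivative in the `μ`-th coordinate direction of `ℝ^m`. -/
noncomputable def pd {m : ℕ} (μ : Fin m) (g : (Fin m → ℝ) → ℝ) : (Fin m → ℝ) → ℝ :=
  fun x => fderiv ℝ g x (Pi.single μ 1)

/-- Weight-one antisymmetrization of `F` over two indices. -/
noncomputable def alt2 {α : Type*} (F : α → α → ℝ) (a b : α) : ℝ :=
  (2 : ℝ)⁻¹ * (F a b - F b a)

/-- Weight-one antisymmetrization of `F` over three indices. -/
noncomputable def alt3 {α : Type*} (F : α → α → α → ℝ) (a b c : α) : ℝ :=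
  (6 : ℝ)⁻¹ * ∑ σ : Equiv.Perm (Fin 3),
    ((Equiv.Perm.sign σ : ℤ) : ℝ) *
      F (![a, b, c] (σ 0)) (![a, b, c] (σ 1)) (![a, b, c] (σ 2))

/-- The bracket `{f,g} := Σ_{μ,ν} π^{μν} ∂_μ f ∂_ν g` attached to a bivector `π` on `ℝ^m`. -/
noncomputable def pBracket {m : ℕ} (π : Fin m → Fin m → (Fin m → ℝ) → ℝ)
    (f g : (Fin m → ℝ) → ℝ) : (Fin m → ℝ) → ℝ :=
  fun x => ∑ μ : Fin m, ∑ ν : Fin m, π μ ν x * pd μ f x * pd ν g x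

/-! helper lemmas -/

theorem aux_sum3_rot {α β γ : Type*} [Fintype α] [Fintype β] [Fintype γ] (F : α → β → γ → ℝ) :
    ∑ a, ∑ b, ∑ c, F a b c = ∑ c, ∑ a, ∑ b, F a b c := by
  simp_rw [Finset.sum_comm (s := (Finset.univ : Finset β)) (t := (Finset.univ : Finset γ))]
  rw [Finset.sum_comm]

theorem aux_sum3_swap {α β γ : Type*} [Fintype α] [Fintype β] [Fintype γ] (F : α → β → γ → ℝ) :
    ∑ a, ∑ b, ∑ c, F a b c = ∑ c, ∑ b, ∑ a, F a b c := by
  rw [aux_sum3_rot]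
  refine Finset.sum_congr rfl fun c _ => ?_
  rw [Finset.sum_comm]

theorem aux_tensor {m n : ℕ} (R r : Fin n → Fin m → ℝ) (dR dr : Fin m → Fin n → Fin m → ℝ)
    (f C : Fin n → Fin n → Fin n → ℝ) (p : Fin m → Fin m → ℝ)
    (hp : ∀ μ ν, p μ ν = ∑ a, R a μ * r a ν) (hanti : ∀ μ ν, p μ ν = - p ν μ)
    (dp : Fin m → Fin m → Fin m → ℝ)
    (hdp : ∀ s ν l, dp s ν l = ∑ b, (dR s b ν * r b l + R b ν * dr s b l))
    (hdanti : ∀ s ν l, dp s ν l = - dp s l ν)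
    (h1 : ∀ a b μ, ∑ l, (r a l * dr l b μ - r b l * dr l a μ) = ∑ c, r c μ * f a b c)
    (h3 : ∀ a b μ, ∑ l, (R a l * dR l b μ - R b l * dR l a μ) = ∑ c, R c μ * C c a b)
    (h6 : ∀ a b μ, ∑ l, (r a l * dR l b μ - R b l * dr l a μ)
      = ∑ c, (r c μ * C a b c + R c μ * f c a b)) (μ ν l : Fin m) :
    (∑ s, p μ s * dp s ν l) + (∑ s, p ν s * dp s l μ) + (∑ s, p l s * dp s μ ν) = 0 := by
  obtain ⟨A, hA⟩ : ∃ A : Fin m → Fin m → Fin m → ℝ,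
    ∀ μ ν l, A μ ν l = ∑ s, ∑ b, p μ s * (R b ν * dr s b l) := ⟨_, fun _ _ _ => rfl⟩
  obtain ⟨B, hB⟩ : ∃ B : Fin m → Fin m → Fin m → ℝ,
    ∀ μ ν l, B μ ν l = ∑ s, ∑ b, p μ s * (dR s b ν * r b l) := ⟨_, fun _ _ _ => rfl⟩
  obtain ⟨P, hP⟩ : ∃ P : Fin m → Fin m → Fin m → ℝ,
    ∀ μ ν l, P μ ν l = ∑ b, ∑ c, r b l * r c ν * ∑ a, R a μ * C a b c := ⟨_, fun _ _ _ => rfl⟩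
  obtain ⟨Q, hQ⟩ : ∃ Q : Fin m → Fin m → Fin m → ℝ,
    ∀ μ ν l, Q μ ν l = ∑ a, ∑ c, R a μ * R c ν * ∑ b, r b l * f c a b := ⟨_, fun _ _ _ => rfl⟩
  have hT : ∀ μ ν l, ∑ s, p μ s * dp s ν l = A μ ν l + B μ ν l := by
    intro μ ν l
    rw [hA, hB, ← Finset.sum_add_distrib]
    refine Finset.sum_congr rfl fun s _ => ?_
    rw [hdp, Finset.mul_sum, ← Finset.sum_add_distrib]
    exact Finset.sum_congr rfl fun b _ => by ring
  have hTa : ∀ μ ν l, A μ ν l + B μ ν l = - (A μ l ν + B μ l ν) := by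
    intro μ ν l
    rw [← hT, ← hT, ← Finset.sum_neg_distrib]
    exact Finset.sum_congr rfl fun s _ => by rw [hdanti]; ring
  -- alternative forms
  have hA1 : ∀ μ ν l, A μ ν l = ∑ a, ∑ b, ∑ s, R a μ * R b ν * (r a s * dr s b l) := by
    intro μ ν l
    rw [hA, aux_sum3_rot (fun a b s => R a μ * R b ν * (r a s * dr s b l))]
    refine Finset.sum_congr rfl fun s _ => ?_
    rw [Finset.sum_comm]
    refine Finset.sum_congr rfl fun b _ => ?_
    rw [hp, Finset.sum_mul]
    exact Finset.sum_congr rfl fun a _ => by ring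
  have hA2 : ∀ μ ν l, - A μ ν l = ∑ a, ∑ b, ∑ s, r a μ * R b ν * (R a s * dr s b l) := by
    intro μ ν l
    rw [hA, aux_sum3_rot (fun a b s => r a μ * R b ν * (R a s * dr s b l)),
      ← Finset.sum_neg_distrib]
    refine Finset.sum_congr rfl fun s _ => ?_
    rw [Finset.sum_comm, ← Finset.sum_neg_distrib]
    refine Finset.sum_congr rfl fun b _ => ?_
    rw [hanti, hp, neg_mul, neg_neg, Finset.sum_mul]
    exact Finset.sum_congr rfl fun a _ => by ring
  have hB1 : ∀ μ ν l, B μ ν l = ∑ a, ∑ b, ∑ s, R a μ * r b l * (r a s * dR s b ν) := by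
    intro μ ν l
    rw [hB, aux_sum3_rot (fun a b s => R a μ * r b l * (r a s * dR s b ν))]
    refine Finset.sum_congr rfl fun s _ => ?_
    rw [Finset.sum_comm]
    refine Finset.sum_congr rfl fun b _ => ?_
    rw [hp, Finset.sum_mul]
    exact Finset.sum_congr rfl fun a _ => by ring
  have hB2 : ∀ μ ν l, - B μ ν l = ∑ a, ∑ b, ∑ s, r a μ * r b l * (R a s * dR s b ν) := by
    intro μ ν l
    rw [hB, aux_sum3_rot (fun a b s => r a μ * r b l * (R a s * dR s b ν)),
      ← Finset.sum_neg_distrib]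
    refine Finset.sum_congr rfl fun s _ => ?_
    rw [Finset.sum_comm, ← Finset.sum_neg_distrib]
    refine Finset.sum_congr rfl fun b _ => ?_
    rw [hanti, hp, neg_mul, neg_neg, Finset.sum_mul]
    exact Finset.sum_congr rfl fun a _ => by ring
  have e1 : ∀ μ ν l, Q μ ν l = A ν μ l - A μ ν l := by
    intro μ ν l
    rw [hQ, hA1 ν μ l, hA1 μ ν l,
      Finset.sum_comm (f := fun a b => ∑ s, R a ν * R b μ * (r a s * dr s b l)),
      ← Finset.sum_sub_distrib]
    refine Finset.sum_congr rfl fun a _ => ?_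
    rw [← Finset.sum_sub_distrib]
    refine Finset.sum_congr rfl fun c _ => ?_
    rw [← Finset.sum_sub_distrib, ← h1, Finset.mul_sum]
    exact Finset.sum_congr rfl fun a _ => by ring
  have e3 : ∀ μ ν l, P μ ν l = B ν μ l - B l μ ν := by
    intro μ ν l
    have : P μ ν l = (- B l μ ν) - (- B ν μ l) := by
      rw [hP, hB2 ν μ l, hB2 l μ ν,
        Finset.sum_comm (f := fun a b => ∑ s, r a ν * r b l * (R a s * dR s b μ)),
        ← Finset.sum_sub_distrib]
      refine Finset.sum_congr rfl fun a _ => ?_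
      rw [← Finset.sum_sub_distrib]
      refine Finset.sum_congr rfl fun c _ => ?_
      rw [← Finset.sum_sub_distrib, ← h3, Finset.mul_sum]
      exact Finset.sum_congr rfl fun a _ => by ring
    rw [this]; ring
  have e6 : ∀ μ ν l, B μ ν l - (- A l μ ν) = P μ ν l + Q μ ν l := by
    intro μ ν l
    have hP' : P μ ν l = ∑ a, ∑ b, ∑ c, R a μ * r b l * (r c ν * C a b c) := by
      rw [hP]
      simp only [Finset.mul_sum]
      rw [aux_sum3_rot]
      exact Finset.sum_congr rfl fun a _ => Finset.sum_congr rfl fun b _ =>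
        Finset.sum_congr rfl fun c _ => by ring
    have hQ' : Q μ ν l = ∑ a, ∑ b, ∑ c, R a μ * r b l * (R c ν * f c a b) := by
      rw [hQ]
      refine Finset.sum_congr rfl fun a _ => ?_
      rw [Finset.sum_comm]
      refine Finset.sum_congr rfl fun c _ => ?_
      rw [Finset.mul_sum]
      exact Finset.sum_congr rfl fun b _ => by ring
    rw [hP', hQ', hB1, hA2,
      Finset.sum_comm (f := fun a b => ∑ s, r a l * R b μ * (R a s * dr s b ν)),
      ← Finset.sum_sub_distrib, ← Finset.sum_add_distrib]
    refine Finset.sum_congr rfl fun a _ => ?_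
    rw [← Finset.sum_sub_distrib, ← Finset.sum_add_distrib]
    refine Finset.sum_congr rfl fun b _ => ?_
    have := congrArg (fun t => R a μ * r b l * t) (h6 a b ν)
    simp only [Finset.mul_sum] at this
    rw [← Finset.sum_sub_distrib, ← Finset.sum_add_distrib]
    convert this using 1 <;> exact Finset.sum_congr rfl fun s _ => by ring
  rw [hT, hT, hT]
  linarith [e6 μ ν l, e6 ν l μ, e6 l μ ν, e1 μ ν l, e1 ν l μ, e1 l μ ν,
    e3 μ ν l, e3 ν l μ, e3 l μ ν, hTa μ ν l, hTa ν l μ, hTa l μ ν]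

theorem aux_sum4 {α : Type*} [Fintype α] (F : α → α → α → α → ℝ) :
    ∑ a, ∑ b, ∑ c, ∑ d, F a b c d = ∑ a, ∑ b, ∑ c, ∑ d, F d c b a := by
  calc _ = ∑ d, ∑ a, ∑ b, ∑ c, F a b c d := by
        rw [← aux_sum3_rot (fun a b d => ∑ c, F a b c d)]
        exact Finset.sum_congr rfl fun a _ => Finset.sum_congr rfl fun b _ => Finset.sum_comm
    _ = _ := Finset.sum_congr rfl fun d _ => aux_sum3_swap _

/-- algebraic Jacobi: `g h k` are first derivatives, `G H K` second derivatives. -/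
theorem aux_jacobi {m : ℕ} (p : Fin m → Fin m → ℝ) (dp : Fin m → Fin m → Fin m → ℝ)
    (hanti : ∀ μ ν, p μ ν = - p ν μ)
    (hJ : ∀ μ ν l, (∑ s, p μ s * dp s ν l) + (∑ s, p ν s * dp s l μ)
      + (∑ s, p l s * dp s μ ν) = 0)
    (g h k : Fin m → ℝ) (G H K : Fin m → Fin m → ℝ)
    (hG : ∀ i j, G i j = G j i) (hH : ∀ i j, H i j = H j i) (hK : ∀ i j, K i j = K j i) :
    (∑ μ, ∑ s, p μ s * g μ * ∑ ν, ∑ l,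
        (dp s ν l * h ν * k l + p ν l * H s ν * k l + p ν l * h ν * K s l))
    + (∑ μ, ∑ s, p μ s * h μ * ∑ ν, ∑ l,
        (dp s ν l * k ν * g l + p ν l * K s ν * g l + p ν l * k ν * G s l))
    + (∑ μ, ∑ s, p μ s * k μ * ∑ ν, ∑ l,
        (dp s ν l * g ν * h l + p ν l * G s ν * h l + p ν l * g ν * H s l)) = 0 := by
  obtain ⟨D, hD⟩ : ∃ D : (Fin m → ℝ) → (Fin m → Fin m → ℝ) → (Fin m → ℝ) → ℝ,
    ∀ g H k, D g H k = ∑ μ, ∑ s, ∑ ν, ∑ l, p μ s * p ν l * g μ * H s ν * k l :=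
    ⟨_, fun _ _ _ => rfl⟩
  have hDs : ∀ g H k, (∀ i j, H i j = H j i) → D g H k = D k H g := by
    intro g H k hH
    rw [hD, hD, aux_sum4]
    refine Finset.sum_congr rfl fun μ _ => Finset.sum_congr rfl fun s _ =>
      Finset.sum_congr rfl fun ν _ => Finset.sum_congr rfl fun l _ => ?_
    rw [hanti l ν, hanti s μ, hH ν s]; ring
  have key : ∀ (g h k : Fin m → ℝ) (H K : Fin m → Fin m → ℝ),
      (∑ μ, ∑ s, p μ s * g μ * ∑ ν, ∑ l,
        (dp s ν l * h ν * k l + p ν l * H s ν * k l + p ν l * h ν * K s l))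
      = (∑ μ, ∑ ν, ∑ l, g μ * h ν * k l * ∑ s, p μ s * dp s ν l) + D g H k - D g K h := by
    intro g h k H K
    have e2 : D g K h = - ∑ μ, ∑ s, ∑ ν, ∑ l, p μ s * g μ * (p ν l * h ν * K s l) := by
      rw [hD, ← Finset.sum_neg_distrib]
      refine Finset.sum_congr rfl fun μ _ => ?_
      rw [← Finset.sum_neg_distrib]
      refine Finset.sum_congr rfl fun s _ => ?_
      rw [Finset.sum_comm, ← Finset.sum_neg_distrib]
      refine Finset.sum_congr rfl fun ν _ => ?_
      rw [← Finset.sum_neg_distrib]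
      refine Finset.sum_congr rfl fun l _ => ?_
      rw [hanti l ν]; ring
    have e1 : (∑ μ, ∑ ν, ∑ l, g μ * h ν * k l * ∑ s, p μ s * dp s ν l)
        = ∑ μ, ∑ s, ∑ ν, ∑ l, p μ s * g μ * (dp s ν l * h ν * k l) := by
      refine Finset.sum_congr rfl fun μ _ => ?_
      rw [← aux_sum3_rot (fun ν l s => p μ s * g μ * (dp s ν l * h ν * k l))]
      refine Finset.sum_congr rfl fun ν _ => Finset.sum_congr rfl fun l _ => ?_
      rw [Finset.mul_sum]
      exact Finset.sum_congr rfl fun s _ => by ring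
    rw [e1, e2, hD, sub_neg_eq_add]
    simp only [← Finset.sum_add_distrib, Finset.mul_sum]
    refine Finset.sum_congr rfl fun μ _ => Finset.sum_congr rfl fun s _ =>
      Finset.sum_congr rfl fun ν _ => Finset.sum_congr rfl fun l _ => ?_
    ring
  rw [key, key, key]
  have hz : (∑ μ, ∑ ν, ∑ l, g μ * h ν * k l * ∑ s, p μ s * dp s ν l)
      + (∑ μ, ∑ ν, ∑ l, h μ * k ν * g l * ∑ s, p μ s * dp s ν l)
      + (∑ μ, ∑ ν, ∑ l, k μ * g ν * h l * ∑ s, p μ s * dp s ν l) = 0 := by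
    rw [aux_sum3_rot (fun μ ν l => h μ * k ν * g l * ∑ s, p μ s * dp s ν l),
      ← aux_sum3_rot (fun ν l μ => k μ * g ν * h l * ∑ s, p μ s * dp s ν l)]
    simp only [← Finset.sum_add_distrib]
    refine Finset.sum_eq_zero fun μ _ => Finset.sum_eq_zero fun ν _ =>
      Finset.sum_eq_zero fun l _ => ?_
    linear_combination (g μ * h ν * k l) * hJ μ ν l
  linarith [hDs g H k hH, hDs g K h hK, hDs h G k hG]

theorem aux_pd_mul {m : ℕ} (s : Fin m) {g h : (Fin m → ℝ) → ℝ} {x : Fin m → ℝ}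
    (hg : DifferentiableAt ℝ g x) (hh : DifferentiableAt ℝ h x) :
    pd s (fun y => g y * h y) x = pd s g x * h x + g x * pd s h x := by
  unfold pd
  rw [fderiv_fun_mul hg hh]
  simp
  ring

theorem aux_pd_sum {m : ℕ} {ι : Type*} [Fintype ι] (s : Fin m) {g : ι → (Fin m → ℝ) → ℝ}
    {x : Fin m → ℝ} (hg : ∀ i, DifferentiableAt ℝ (g i) x) :
    pd s (fun y => ∑ i, g i y) x = ∑ i, pd s (g i) x := by
  unfold pd
  rw [fderiv_fun_sum (fun i _ => hg i)]
  simp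

theorem aux_pd_smooth {m : ℕ} (s : Fin m) {g : (Fin m → ℝ) → ℝ}
    (hg : ContDiff ℝ (⊤ : ℕ∞) g) : ContDiff ℝ (⊤ : ℕ∞) (pd s g) := by
  unfold pd
  exact (hg.fderiv_right (m := ((⊤ : ℕ∞) : WithTop ℕ∞)) (by simp)).clm_apply contDiff_const

theorem aux_diff {m : ℕ} {g : (Fin m → ℝ) → ℝ} (hg : ContDiff ℝ (⊤ : ℕ∞) g) (x : Fin m → ℝ) :
    DifferentiableAt ℝ g x := (hg.differentiable (by simp)) x

theorem aux_pd_comm {m : ℕ} (s t : Fin m) {g : (Fin m → ℝ) → ℝ}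
    (hg : ContDiff ℝ (⊤ : ℕ∞) g) (x : Fin m → ℝ) : pd s (pd t g) x = pd t (pd s g) x := by
  have hd : DifferentiableAt ℝ (fderiv ℝ g) x :=
    ((hg.fderiv_right (m := ((⊤ : ℕ∞) : WithTop ℕ∞)) (by simp)).differentiable (by simp)) x
  have e : ∀ s t : Fin m, pd s (pd t g) x
      = fderiv ℝ (fderiv ℝ g) x (Pi.single s 1) (Pi.single t 1) := by
    intro s t
    unfold pd
    rw [fderiv_clm_apply hd (differentiableAt_const _)]
    simp
  rw [e, e]
  have := (hg.contDiffAt (x := x)).isSymmSndFDerivAt (by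
    simp only [minSmoothness_of_isRCLikeNormedField]; exact WithTop.coe_le_coe.2 (le_top : (2 : ℕ∞) ≤ ⊤))
  exact this _ _

theorem aux_pd_bracket {m : ℕ} (s : Fin m) {π : Fin m → Fin m → (Fin m → ℝ) → ℝ}
    (hπ : ∀ μ ν, ContDiff ℝ (⊤ : ℕ∞) (π μ ν)) {h k : (Fin m → ℝ) → ℝ}
    (hh : ContDiff ℝ (⊤ : ℕ∞) h) (hk : ContDiff ℝ (⊤ : ℕ∞) k) (x : Fin m → ℝ) :
    pd s (pBracket π h k) x = ∑ ν, ∑ l, (pd s (π ν l) x * pd ν h x * pd l k x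
      + π ν l x * pd s (pd ν h) x * pd l k x + π ν l x * pd ν h x * pd s (pd l k) x) := by
  have d1 : ∀ ν l, ContDiff ℝ (⊤ : ℕ∞) (fun y => π ν l y * pd ν h y) := fun ν l =>
    (hπ ν l).mul (aux_pd_smooth ν hh)
  have d2 : ∀ ν l, ContDiff ℝ (⊤ : ℕ∞) (fun y => π ν l y * pd ν h y * pd l k y) := fun ν l =>
    (d1 ν l).mul (aux_pd_smooth l hk)
  unfold pBracket
  rw [aux_pd_sum s (g := fun ν y => ∑ l, π ν l y * pd ν h y * pd l k y)
    (fun ν => aux_diff (ContDiff.sum fun l _ => d2 ν l) x)]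
  refine Finset.sum_congr rfl fun ν _ => ?_
  rw [aux_pd_sum s (g := fun l y => π ν l y * pd ν h y * pd l k y)
    (fun l => aux_diff (d2 ν l) x)]
  refine Finset.sum_congr rfl fun l _ => ?_
  rw [aux_pd_mul s (aux_diff (d1 ν l) x) (aux_diff (aux_pd_smooth l hk) x),
    aux_pd_mul s (aux_diff (hπ ν l) x) (aux_diff (aux_pd_smooth ν hh) x)]
  ring


/-- A Lie bialgebroid on the trivial rank-`n` bundle over `ℝ^m`, given in components by
anchors `ρ_a^μ`, `R^{a|μ}` and structure functions `f_{ab}^c`, `C_c^{ab}` subject to the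
constraints (C1)–(C7), induces a canonical Poisson bracket on the base `ℝ^m` via the
bivector `π^{μν} := Σ_a R^{a|μ} ρ_a^ν`: the bivector is antisymmetric, and the associated
bracket on smooth functions is antisymmetric, a derivation in each argument, and satisfies
the Jacobi identity. -/
theorem lie_bialgebroid_base_poisson
    (m n : ℕ) (hm : 1 ≤ m) (hn : 1 ≤ n)
    (ρ R : Fin n → Fin m → (Fin m → ℝ) → ℝ)
    (f C : Fin n → Fin n → Fin n → (Fin m → ℝ) → ℝ)
    (hρ : ∀ a μ, ContDiff ℝ (⊤ : ℕ∞) (ρ a μ)) (hR : ∀ a μ, ContDiff ℝ (⊤ : ℕ∞) (R a μ))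
    (hf : ∀ a b c, ContDiff ℝ (⊤ : ℕ∞) (f a b c)) (hC : ∀ c a b, ContDiff ℝ (⊤ : ℕ∞) (C c a b))
    (hfanti : ∀ a b c x, f a b c x = - f b a c x)
    (hCanti : ∀ c a b x, C c a b x = - C c b a x)
    -- (C1)
    (hC1 : ∀ a b μ x,
      (∑ lam : Fin m, (ρ a lam x * pd lam (ρ b μ) x - ρ b lam x * pd lam (ρ a μ) x))
        = ∑ c : Fin n, ρ c μ x * f a b c x)
    -- (C2)
    (hC2 : ∀ a b c d x,
      alt3 (fun a' b' c' =>
        (∑ lam : Fin m, ρ a' lam x * pd lam (f b' c' d) x)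
          - ∑ e : Fin n, f e a' d x * f b' c' e x) a b c = 0)
    -- (C3)
    (hC3 : ∀ a b μ x,
      (∑ lam : Fin m, (R a lam x * pd lam (R b μ) x - R b lam x * pd lam (R a μ) x))
        = ∑ c : Fin n, R c μ x * C c a b x)
    -- (C4)
    (hC4 : ∀ a b c d x,
      alt3 (fun a' b' c' =>
        (∑ lam : Fin m, R a' lam x * pd lam (C d b' c') x)
          - ∑ e : Fin n, C d e a' x * C e b' c' x) a b c = 0)
    -- (C5)
    (hC5 : ∀ μ ν x, ∑ a : Fin n, (R a μ x * ρ a ν x + R a ν x * ρ a μ x) = 0)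
    -- (C6)
    (hC6 : ∀ a b μ x,
      (∑ lam : Fin m, (ρ a lam x * pd lam (R b μ) x - R b lam x * pd lam (ρ a μ) x))
        = ∑ c : Fin n, (ρ c μ x * C a b c x + R c μ x * f c a b x))
    -- (C7)
    (hC7 : ∀ a b c d x,
      alt2 (fun a' b' => ∑ lam : Fin m, ρ a' lam x * pd lam (C b' c d) x) a b
        + alt2 (fun c' d' => ∑ lam : Fin m, R c' lam x * pd lam (f a b d') x) c d
        + 2 * alt2 (fun a' b' =>
            alt2 (fun c' d' => ∑ e : Fin n, f e a' c' x * C b' d' e x) c d) a b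
        - (2 : ℝ)⁻¹ * ∑ e : Fin n, f a b e x * C e c d x = 0) :
    -- the bivector π^{μν} := Σ_a R^{a|μ} ρ_a^ν is antisymmetric
    (∀ μ ν x, (∑ a : Fin n, R a μ x * ρ a ν x) = - ∑ a : Fin n, R a ν x * ρ a μ x)
    -- the associated bracket is antisymmetric on smooth functions
    ∧ (∀ g h : (Fin m → ℝ) → ℝ, ContDiff ℝ (⊤ : ℕ∞) g → ContDiff ℝ (⊤ : ℕ∞) h →
        ∀ x, pBracket (fun μ ν y => ∑ a : Fin n, R a μ y * ρ a ν y) g h x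
          = - pBracket (fun μ ν y => ∑ a : Fin n, R a μ y * ρ a ν y) h g x)
    -- it is a derivation in each argument
    ∧ (∀ g h k : (Fin m → ℝ) → ℝ, ContDiff ℝ (⊤ : ℕ∞) g → ContDiff ℝ (⊤ : ℕ∞) h → ContDiff ℝ (⊤ : ℕ∞) k →
        ∀ x, pBracket (fun μ ν y => ∑ a : Fin n, R a μ y * ρ a ν y) g (fun y => h y * k y) x
          = pBracket (fun μ ν y => ∑ a : Fin n, R a μ y * ρ a ν y) g h x * k x
            + h x * pBracket (fun μ ν y => ∑ a : Fin n, R a μ y * ρ a ν y) g k x)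
    ∧ (∀ g h k : (Fin m → ℝ) → ℝ, ContDiff ℝ (⊤ : ℕ∞) g → ContDiff ℝ (⊤ : ℕ∞) h → ContDiff ℝ (⊤ : ℕ∞) k →
        ∀ x, pBracket (fun μ ν y => ∑ a : Fin n, R a μ y * ρ a ν y) (fun y => g y * h y) k x
          = pBracket (fun μ ν y => ∑ a : Fin n, R a μ y * ρ a ν y) g k x * h x
            + g x * pBracket (fun μ ν y => ∑ a : Fin n, R a μ y * ρ a ν y) h k x)
    -- and it satisfies the Jacobi identity
    ∧ (∀ g h k : (Fin m → ℝ) → ℝ, ContDiff ℝ (⊤ : ℕ∞) g → ContDiff ℝ (⊤ : ℕ∞) h → ContDiff ℝ (⊤ : ℕ∞) k →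
        ∀ x, pBracket (fun μ ν y => ∑ a : Fin n, R a μ y * ρ a ν y) g
              (pBracket (fun μ ν y => ∑ a : Fin n, R a μ y * ρ a ν y) h k) x
          + pBracket (fun μ ν y => ∑ a : Fin n, R a μ y * ρ a ν y) h
              (pBracket (fun μ ν y => ∑ a : Fin n, R a μ y * ρ a ν y) k g) x
          + pBracket (fun μ ν y => ∑ a : Fin n, R a μ y * ρ a ν y) k
              (pBracket (fun μ ν y => ∑ a : Fin n, R a μ y * ρ a ν y) g h) x = 0) := by
  have hπa : ∀ μ ν x, (∑ a : Fin n, R a μ x * ρ a ν x) = - ∑ a : Fin n, R a ν x * ρ a μ x := by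
    intro μ ν x
    have := hC5 μ ν x
    rw [Finset.sum_add_distrib] at this
    linarith
  have hπs : ∀ μ ν, ContDiff ℝ (⊤ : ℕ∞) (fun y => ∑ a : Fin n, R a μ y * ρ a ν y) := fun μ ν =>
    ContDiff.sum fun a _ => (hR a μ).mul (hρ a ν)
  refine ⟨hπa, ?_, ?_, ?_, ?_⟩
  · intro g h _ _ x
    unfold pBracket
    rw [Finset.sum_comm, ← Finset.sum_neg_distrib]
    refine Finset.sum_congr rfl fun ν _ => ?_
    rw [← Finset.sum_neg_distrib]
    refine Finset.sum_congr rfl fun μ _ => ?_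
    simp only []
    rw [hπa]; ring
  · intro g h k _ hh hk x
    unfold pBracket
    simp only [Finset.sum_mul (s := (Finset.univ : Finset (Fin m))),
      Finset.mul_sum (s := (Finset.univ : Finset (Fin m))), ← Finset.sum_add_distrib]
    refine Finset.sum_congr rfl fun μ _ => Finset.sum_congr rfl fun ν _ => ?_
    rw [aux_pd_mul ν (aux_diff hh x) (aux_diff hk x)]; ring
  · intro g h k hg hh _ x
    unfold pBracket
    simp only [Finset.sum_mul (s := (Finset.univ : Finset (Fin m))),
      Finset.mul_sum (s := (Finset.univ : Finset (Fin m))), ← Finset.sum_add_distrib]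
    refine Finset.sum_congr rfl fun μ _ => Finset.sum_congr rfl fun ν _ => ?_
    rw [aux_pd_mul μ (aux_diff hg x) (aux_diff hh x)]; ring
  · intro g h k hg hh hk x
    have hdp : ∀ s ν l, pd s (fun y => ∑ a : Fin n, R a ν y * ρ a l y) x
        = ∑ b, (pd s (R b ν) x * ρ b l x + R b ν x * pd s (ρ b l) x) := by
      intro s ν l
      rw [aux_pd_sum s (g := fun a y => R a ν y * ρ a l y)
        (fun a => aux_diff ((hR a ν).mul (hρ a l)) x)]
      exact Finset.sum_congr rfl fun b _ =>
        aux_pd_mul s (aux_diff (hR b ν) x) (aux_diff (hρ b l) x)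
    have hda : ∀ s ν l, pd s (fun y => ∑ a : Fin n, R a ν y * ρ a l y) x
        = - pd s (fun y => ∑ a : Fin n, R a l y * ρ a ν y) x := by
      intro s ν l
      have : (fun y => ∑ a : Fin n, R a ν y * ρ a l y)
        = fun y => - ∑ a : Fin n, R a l y * ρ a ν y := funext fun y => hπa ν l y
      rw [this]
      unfold pd
      rw [fderiv_fun_neg]
      simp
    have hJ := aux_tensor (fun a μ => R a μ x) (fun a μ => ρ a μ x)
      (fun s a μ => pd s (R a μ) x) (fun s a μ => pd s (ρ a μ) x)
      (fun a b c => f a b c x) (fun a b c => C a b c x)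
      (fun μ ν => ∑ a : Fin n, R a μ x * ρ a ν x) (fun _ _ => rfl) (fun μ ν => hπa μ ν x)
      (fun s ν l => pd s (fun y => ∑ a : Fin n, R a ν y * ρ a l y) x) hdp hda
      (fun a b μ => hC1 a b μ x) (fun a b μ => hC3 a b μ x) (fun a b μ => hC6 a b μ x)
    have := aux_jacobi _ _ (fun μ ν => hπa μ ν x) hJ
      (fun μ => pd μ g x) (fun μ => pd μ h x) (fun μ => pd μ k x)
      (fun s μ => pd s (pd μ g) x) (fun s μ => pd s (pd μ h) x) (fun s μ => pd s (pd μ k) x)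
      (fun i j => aux_pd_comm i j hg x) (fun i j => aux_pd_comm i j hh x)
      (fun i j => aux_pd_comm i j hk x)
    have hb : ∀ u v w : (Fin m → ℝ) → ℝ, ContDiff ℝ (⊤ : ℕ∞) v → ContDiff ℝ (⊤ : ℕ∞) w →
        pBracket (fun μ ν y => ∑ a : Fin n, R a μ y * ρ a ν y) u
          (pBracket (fun μ ν y => ∑ a : Fin n, R a μ y * ρ a ν y) v w) x
        = ∑ μ, ∑ s, (∑ a : Fin n, R a μ x * ρ a s x) * pd μ u x * ∑ ν, ∑ l,
          (pd s (fun y => ∑ a : Fin n, R a ν y * ρ a l y) x * pd ν v x * pd l w x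
          + (∑ a : Fin n, R a ν x * ρ a l x) * pd s (pd ν v) x * pd l w x
          + (∑ a : Fin n, R a ν x * ρ a l x) * pd ν v x * pd s (pd l w) x) := by
      intro u v w hv hw
      conv_lhs => unfold pBracket
      refine Finset.sum_congr rfl fun μ _ => Finset.sum_congr rfl fun s _ => ?_
      congr 1
      exact aux_pd_bracket s hπs hv hw x
    rw [hb g h k hh hk, hb h k g hk hg, hb k g h hg hh]
    exact this
end

section
/- Fix m, n ≥ 1 and smooth real-valued functions ρ_a^μ, R^{a|μ}, f_{ab}^c, C_c^{ab}, φ^{abc}, ψ_{abc} on ℝ^m (base indices μ, ν, λ, ρ in Fin m, fibre indices a, b, c, d, e in Fin n, repeated indices summed), with f_{ab}^c = −f_{ba}^c, C_c^{ab} = −C_c^{ba}, and φ, ψ totally antisymmetric. Assume the nine proto-Lie bialgebroid constraints: (C1) ρ_a^λ ∂_λ ρ_b^μ − ρ_b^λ ∂_λ ρ_a^μ − ρ_c^μ f_{ab}^c + R^{c|μ} ψ_{cab} = 0; (C2) Alt_{abc}[ ρ_a^λ ∂_λ f_{bc}^d − f_{ea}^d f_{bc}^e + (1/3) R^{d|λ}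 ∂_λ ψ_{abc} − ψ_{eab} C_c^{ed} ] = 0; (C3) R^{a|λ} ∂_λ R^{b|μ} − R^{b|λ} ∂_λ R^{a|μ} − R^{c|μ} C_c^{ab} + ρ_c^μ φ^{cab} = 0; (C4) Alt^{abc}[ R^{a|λ} ∂_λ C_d^{bc} − C_d^{ea} C_e^{bc} + (1/3) ρ_d^λ ∂_λ φ^{abc} − φ^{eab} f_{ed}^c ] = 0; (C5) R^{a|μ} ρ_a^ν + R^{a|ν} ρ_a^μ = 0; (C6) ρ_a^λ ∂_λ R^{b|μ} − R^{b|λ} ∂_λ ρ_a^μ − ρ_c^μ C_a^{bc} − R^{c|μ} f_{ca}^b = 0; (C7) Alt_{ab}[ρ_a^λ ∂_λ C_b^{cd}] + Alt^{cd}[R^{c|λ} ∂_λ f_{ab}^d] + 2·Alt_{ab}Alt^{cd}[f_{ea}^c C_b^{de}] − (1/2) f_{ab}^e C_e^{cd} − (1/2) ψ_{eab} φ^{ecd} = 0; (C8) Alt^{abcd}[ (1/3) R^{d|λ} ∂_λ φ^{abc} + (1/2) φ^{eab} C_e^{cd} ] = 0; (C9) Alt_{abcd}[ (1/3) ρ_d^λ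 ∂_λ ψ_{abc} + (1/2) ψ_{eab} f_{cd}^e ] = 0. Define π^{μν} := Σ_a R^{a|μ} ρ_a^ν (antisymmetric by (C5)). Then the Jacobi identity for π is deformed as: Σ_ρ ( π^{ρλ} ∂_ρ π^{μν} + π^{ρμ} ∂_ρ π^{νλ} + π^{ρν} ∂_ρ π^{λμ} ) = Σ_{a,b,c} ( ψ_{abc} R^{a|λ} R^{b|μ} R^{c|ν} + φ^{abc} ρ_a^λ ρ_b^μ ρ_c^ν ) for all λ, μ, ν. -/
open scoped BigOperators

/-- Weight-one antisymmetrization of `F` over four indices. -/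
noncomputable def alt4 {α : Type*} (F : α → α → α → α → ℝ) (a b c d : α) : ℝ :=
  (24 : ℝ)⁻¹ * ∑ σ : Equiv.Perm (Fin 4),
    ((Equiv.Perm.sign σ : ℤ) : ℝ) *
      F (![a, b, c, d] (σ 0)) (![a, b, c, d] (σ 1)) (![a, b, c, d] (σ 2)) (![a, b, c, d] (σ 3))

lemma plb_aux {m n : ℕ} (A : Fin n → Fin m → ℝ) (B : Fin m → Fin n → ℝ) :
    ∑ r, (∑ a, A a r) * (∑ b, B r b) = ∑ a, ∑ b, ∑ r, A a r * B r b := by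
  simp only [Finset.sum_mul_sum]
  rw [Finset.sum_comm]
  exact Finset.sum_congr rfl fun a _ => Finset.sum_comm

lemma plb_cyc {n : ℕ} (g : Fin n → Fin n → Fin n → ℝ) :
    ∑ a, ∑ b, ∑ c, g a b c = ∑ a, ∑ b, ∑ c, g b c a := by
  rw [Finset.sum_comm' (t' := Finset.univ) (s' := fun _ => Finset.univ) (by simp)]
  rw [Finset.sum_comm]
  rw [Finset.sum_congr rfl fun a _ => Finset.sum_comm]
  exact Finset.sum_comm

lemma plb_congr {n k : ℕ} {g h : Fin n → Fin n → Fin k → ℝ} (H : ∀ a b c, g a b c = h a b c) :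
    ∑ a, ∑ b, ∑ c, g a b c = ∑ a, ∑ b, ∑ c, h a b c := by
  simp only [H]

lemma plb_alg {m n : ℕ} (p R : Fin n → Fin m → ℝ) (dp dR : Fin m → Fin n → Fin m → ℝ)
    (f C φ ψ : Fin n → Fin n → Fin n → ℝ)
    (hf : ∀ a b c, f a b c = - f b a c)
    (hC : ∀ c a b, C c a b = - C c b a)
    (hφ₁ : ∀ a b c, φ a b c = - φ b a c)
    (hφ₂ : ∀ a b c, φ a b c = - φ a c b)
    (hψ₁ : ∀ a b c, ψ a b c = - ψ b a c)
    (hψ₂ : ∀ a b c, ψ a b c = - ψ a c b)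
    (h1 : ∀ a b μ,
      (∑ r : Fin m, (p a r * dp r b μ - p b r * dp r a μ))
        - (∑ c : Fin n, p c μ * f a b c) + (∑ c : Fin n, R c μ * ψ c a b) = 0)
    (h3 : ∀ a b μ,
      (∑ r : Fin m, (R a r * dR r b μ - R b r * dR r a μ))
        - (∑ c : Fin n, R c μ * C c a b) + (∑ c : Fin n, p c μ * φ c a b) = 0)
    (h5 : ∀ μ ν, ∑ a : Fin n, R a μ * p a ν = - ∑ a : Fin n, p a μ * R a ν)
    (h5' : ∀ r μ ν, ∑ a : Fin n, (dR r a μ * p a ν + R a μ * dp r a ν)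
      = - ∑ a : Fin n, (dR r a ν * p a μ + R a ν * dp r a μ))
    (h6 : ∀ a b μ,
      (∑ r : Fin m, (p a r * dR r b μ - R b r * dp r a μ))
        - (∑ c : Fin n, p c μ * C a b c) - (∑ c : Fin n, R c μ * f c a b) = 0)
    (L M N : Fin m) :
    ∑ r : Fin m, ((∑ a, R a r * p a L) * (∑ a, (dR r a M * p a N + R a M * dp r a N))
      + (∑ a, R a r * p a M) * (∑ a, (dR r a N * p a L + R a N * dp r a L))
      + (∑ a, R a r * p a N) * (∑ a, (dR r a L * p a M + R a L * dp r a M)))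
    = ∑ a, ∑ b, ∑ c, (ψ a b c * R a L * R b M * R c N + φ a b c * p a L * p b M * p c N) := by
  obtain ⟨X, hX⟩ : ∃ X : Fin m → Fin m → Fin m → ℝ, ∀ L M N, X L M N =
    ∑ r, (∑ a, R a r * p a L) * (∑ b, dR r b M * p b N) := ⟨_, fun _ _ _ => rfl⟩
  obtain ⟨Y, hY⟩ : ∃ Y : Fin m → Fin m → Fin m → ℝ, ∀ L M N, Y L M N =
    ∑ r, (∑ a, R a r * p a L) * (∑ b, R b M * dp r b N) := ⟨_, fun _ _ _ => rfl⟩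
  obtain ⟨K, hK⟩ : ∃ K : Fin m → Fin m → Fin m → ℝ, ∀ L M N, K L M N =
    ∑ a, ∑ b, ∑ c, p a M * p b N * (R c L * C c a b) := ⟨_, fun _ _ _ => rfl⟩
  obtain ⟨F, hF⟩ : ∃ F : Fin m → Fin m → Fin m → ℝ, ∀ L M N, F L M N =
    ∑ a, ∑ b, ∑ c, R a M * R b N * (p c L * f a b c) := ⟨_, fun _ _ _ => rfl⟩
  obtain ⟨Φ, hΦ⟩ : ∃ Φ : Fin m → Fin m → Fin m → ℝ, ∀ L M N, Φ L M N =
    ∑ a, ∑ b, ∑ c, φ a b c * p a L * p b M * p c N := ⟨_, fun _ _ _ => rfl⟩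
  obtain ⟨Ψ, hΨ⟩ : ∃ Ψ : Fin m → Fin m → Fin m → ℝ, ∀ L M N, Ψ L M N =
    ∑ a, ∑ b, ∑ c, ψ a b c * R a L * R b M * R c N := ⟨_, fun _ _ _ => rfl⟩
  -- expanded forms
  have hX1 : ∀ L M N, X L M N = ∑ a, ∑ b, ∑ r, p a L * p b N * (R a r * dR r b M) := by
    intro L M N
    rw [hX, plb_aux]; exact plb_congr fun a b r => by ring
  have hX2 : ∀ L M N, X L M N = - ∑ a, ∑ b, ∑ r, R a L * p b N * (p a r * dR r b M) := by
    intro L M N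
    rw [hX]; simp only [h5, neg_mul, Finset.sum_neg_distrib]
    rw [plb_aux]; congr 1; exact plb_congr fun a b r => by ring
  have hY1 : ∀ L M N, Y L M N = ∑ a, ∑ b, ∑ r, p a L * R b M * (R a r * dp r b N) := by
    intro L M N
    rw [hY, plb_aux]; exact plb_congr fun a b r => by ring
  have hY2 : ∀ L M N, Y L M N = - ∑ a, ∑ b, ∑ r, R a L * R b M * (p a r * dp r b N) := by
    intro L M N
    rw [hY]; simp only [h5, neg_mul, Finset.sum_neg_distrib]
    rw [plb_aux]; congr 1; exact plb_congr fun a b r => by ring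
  have e5 : ∀ L M N, X L M N + Y L M N = - (X L N M + Y L N M) := by
    intro L M N
    simp only [hX, hY, ← Finset.sum_add_distrib, ← mul_add, ← Finset.sum_neg_distrib]
    refine Finset.sum_congr rfl fun r _ => ?_
    rw [h5' r M N]; simp
  have hKa : ∀ L M N, K L M N = - K L N M := by
    intro L M N
    rw [hK, hK, Finset.sum_comm]
    simp only [← Finset.sum_neg_distrib]
    refine Finset.sum_congr rfl fun a _ => Finset.sum_congr rfl fun b _ =>
      Finset.sum_congr rfl fun c _ => ?_
    rw [hC c b a]; ring
  have hFa : ∀ L M N, F L M N = - F L N M := by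
    intro L M N
    rw [hF, hF, Finset.sum_comm]
    simp only [← Finset.sum_neg_distrib]
    refine Finset.sum_congr rfl fun a _ => Finset.sum_congr rfl fun b _ =>
      Finset.sum_congr rfl fun c _ => ?_
    rw [hf b a c]; ring
  have e3 : ∀ L M N, X L M N - X N M L = K M L N + Φ L M N := by
    intro L M N
    have h : ∑ a, ∑ b, p a L * p b N * (_ : ℝ) = ∑ a : Fin n, ∑ b : Fin n, p a L * p b N * 0 :=
      Finset.sum_congr rfl fun a _ => Finset.sum_congr rfl fun b _ =>
        congrArg (fun t => p a L * p b N * t) (h3 a b M)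
    simp only [mul_add, mul_sub, Finset.sum_add_distrib, Finset.sum_sub_distrib, Finset.mul_sum,
      mul_zero, Finset.sum_const_zero] at h
    have hb : X N M L = ∑ a, ∑ b, ∑ r, p a L * p b N * (R b r * dR r a M) := by
      rw [hX1, Finset.sum_comm]; exact plb_congr fun a b r => by ring
    have hc : Φ L M N = - ∑ a, ∑ b, ∑ c, p a L * p b N * (p c M * φ c a b) := by
      rw [hΦ, Finset.sum_congr rfl fun a _ => Finset.sum_comm]
      simp only [← Finset.sum_neg_distrib]
      exact plb_congr fun a b c => by rw [hφ₁ a c b]; ring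
    rw [hX1 L, hb, hc, hK]
    linarith
  have e1 : ∀ L M N, - Y L M N + Y M L N = F N L M - Ψ L M N := by
    intro L M N
    have h : ∑ a, ∑ b, R a L * R b M * (_ : ℝ) = ∑ a : Fin n, ∑ b : Fin n, R a L * R b M * 0 :=
      Finset.sum_congr rfl fun a _ => Finset.sum_congr rfl fun b _ =>
        congrArg (fun t => R a L * R b M * t) (h1 a b N)
    simp only [mul_add, mul_sub, Finset.sum_add_distrib, Finset.sum_sub_distrib, Finset.mul_sum,
      mul_zero, Finset.sum_const_zero] at h
    have hb : Y M L N = - ∑ a, ∑ b, ∑ r, R a L * R b M * (p b r * dp r a N) := by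
      rw [hY2, Finset.sum_comm]; congr 1; exact plb_congr fun a b r => by ring
    have hc : Ψ L M N = ∑ a, ∑ b, ∑ c, R a L * R b M * (R c N * ψ c a b) := by
      rw [hΨ]
      exact plb_congr fun a b c => by rw [hψ₁ c a b, hψ₂ a c b]; ring
    rw [hY2 L, hb, hc, hF]
    linarith
  have e6 : ∀ L M N, - X L M N - Y N L M = K L N M + F N M L := by
    intro L M N
    have h : ∑ a, ∑ b, R a L * p b N * (_ : ℝ) = ∑ a : Fin n, ∑ b : Fin n, R a L * p b N * 0 :=
      Finset.sum_congr rfl fun a _ => Finset.sum_congr rfl fun b _ =>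
        congrArg (fun t => R a L * p b N * t) (h6 a b M)
    simp only [mul_sub, Finset.sum_sub_distrib, Finset.mul_sum,
      mul_zero, Finset.sum_const_zero] at h
    have hb : Y N L M = ∑ a, ∑ b, ∑ r, R a L * p b N * (R b r * dp r a M) := by
      rw [hY1, Finset.sum_comm]; exact plb_congr fun a b r => by ring
    have hc : K L N M = ∑ a, ∑ b, ∑ c, R a L * p b N * (p c M * C a b c) := by
      rw [hK, plb_cyc]; exact plb_congr fun a b c => by ring
    have hd : F N M L = ∑ a, ∑ b, ∑ c, R a L * p b N * (R c M * f c a b) := by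
      rw [hF, plb_cyc (fun a b c => R a L * p b N * (R c M * f c a b))]
      exact plb_congr fun a b c => by ring
    rw [hX2 L, hb, hc, hd]
    linarith
  have goalL : ∑ r : Fin m, ((∑ a, R a r * p a L) * (∑ a, (dR r a M * p a N + R a M * dp r a N))
      + (∑ a, R a r * p a M) * (∑ a, (dR r a N * p a L + R a N * dp r a L))
      + (∑ a, R a r * p a N) * (∑ a, (dR r a L * p a M + R a L * dp r a M)))
      = (X L M N + Y L M N) + (X M N L + Y M N L) + (X N L M + Y N L M) := by
    simp only [hX, hY, ← Finset.sum_add_distrib, ← mul_add]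
  have goalR : ∑ a, ∑ b, ∑ c, (ψ a b c * R a L * R b M * R c N + φ a b c * p a L * p b M * p c N)
      = Ψ L M N + Φ L M N := by
    simp only [hΨ, hΦ, ← Finset.sum_add_distrib]
  have hΦ' : ∀ L M N, Φ M N L = Φ L M N := by
    intro L M N
    rw [hΦ, hΦ, plb_cyc (fun a b c => φ a b c * p a M * p b N * p c L)]
    exact plb_congr fun a b c => by rw [hφ₂ b c a, hφ₁ b a c]; ring
  have hΨ' : ∀ L M N, Ψ M N L = Ψ L M N := by
    intro L M N
    rw [hΨ, hΨ, plb_cyc (fun a b c => ψ a b c * R a M * R b N * R c L)]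
    exact plb_congr fun a b c => by rw [hψ₂ b c a, hψ₁ b a c]; ring
  rw [goalL, goalR]
  linarith [e3 L M N, e3 M N L, e3 N L M, e1 L M N, e1 M N L, e1 N L M, e6 L M N, e6 M N L,
    e6 N L M, e5 L M N, e5 M N L, e5 N L M, hKa L M N, hKa M N L, hKa N L M, hFa L M N,
    hFa M N L, hFa N L M, hΦ' L M N, hΦ' M N L, hΦ' N L M, hΨ' L M N, hΨ' M N L, hΨ' N L M]


/-- For a proto-Lie bialgebroid on the trivial rank-`n` bundle over `ℝ^m`, given in
components by anchors `ρ_a^μ`, `R^{a|μ}`, structure functions `f_{ab}^c`, `C_c^{ab}` and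
totally antisymmetric `φ^{abc}`, `ψ_{abc}` subject to the constraints (C1)–(C9), the
Jacobi identity for the bivector `π^{μν} := Σ_a R^{a|μ} ρ_a^ν` is deformed as
`π^{ρλ}∂_ρ π^{μν} + cyclic = ψ_{abc} R^{a|λ}R^{b|μ}R^{c|ν} + φ^{abc} ρ_a^λ ρ_b^μ ρ_c^ν`. -/
theorem proto_lie_bialgebroid_deformed_jacobi
    (m n : ℕ) (hm : 1 ≤ m) (hn : 1 ≤ n)
    (ρ R : Fin n → Fin m → (Fin m → ℝ) → ℝ)
    (f C : Fin n → Fin n → Fin n → (Fin m → ℝ) → ℝ)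
    (φ ψ : Fin n → Fin n → Fin n → (Fin m → ℝ) → ℝ)
    (hρ : ∀ a μ, ContDiff ℝ (⊤ : ℕ∞) (ρ a μ)) (hR : ∀ a μ, ContDiff ℝ (⊤ : ℕ∞) (R a μ))
    (hf : ∀ a b c, ContDiff ℝ (⊤ : ℕ∞) (f a b c)) (hC : ∀ c a b, ContDiff ℝ (⊤ : ℕ∞) (C c a b))
    (hφ : ∀ a b c, ContDiff ℝ (⊤ : ℕ∞) (φ a b c)) (hψ : ∀ a b c, ContDiff ℝ (⊤ : ℕ∞) (ψ a b c))
    (hfanti : ∀ a b c x, f a b c x = - f b a c x)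
    (hCanti : ∀ c a b x, C c a b x = - C c b a x)
    (hφanti₁ : ∀ a b c x, φ a b c x = - φ b a c x)
    (hφanti₂ : ∀ a b c x, φ a b c x = - φ a c b x)
    (hψanti₁ : ∀ a b c x, ψ a b c x = - ψ b a c x)
    (hψanti₂ : ∀ a b c x, ψ a b c x = - ψ a c b x)
    -- (C1)
    (hC1 : ∀ a b μ x,
      (∑ lam : Fin m, (ρ a lam x * pd lam (ρ b μ) x - ρ b lam x * pd lam (ρ a μ) x))
        - (∑ c : Fin n, ρ c μ x * f a b c x) + (∑ c : Fin n, R c μ x * ψ c a b x) = 0)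
    -- (C2)
    (hC2 : ∀ a b c d x,
      alt3 (fun a' b' c' =>
        (∑ lam : Fin m, ρ a' lam x * pd lam (f b' c' d) x)
          - (∑ e : Fin n, f e a' d x * f b' c' e x)
          + (3 : ℝ)⁻¹ * (∑ lam : Fin m, R d lam x * pd lam (ψ a' b' c') x)
          - (∑ e : Fin n, ψ e a' b' x * C c' e d x)) a b c = 0)
    -- (C3)
    (hC3 : ∀ a b μ x,
      (∑ lam : Fin m, (R a lam x * pd lam (R b μ) x - R b lam x * pd lam (R a μ) x))
        - (∑ c : Fin n, R c μ x * C c a b x) + (∑ c : Fin n, ρ c μ x * φ c a b x) = 0)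
    -- (C4)
    (hC4 : ∀ a b c d x,
      alt3 (fun a' b' c' =>
        (∑ lam : Fin m, R a' lam x * pd lam (C d b' c') x)
          - (∑ e : Fin n, C d e a' x * C e b' c' x)
          + (3 : ℝ)⁻¹ * (∑ lam : Fin m, ρ d lam x * pd lam (φ a' b' c') x)
          - (∑ e : Fin n, φ e a' b' x * f e d c' x)) a b c = 0)
    -- (C5)
    (hC5 : ∀ μ ν x, ∑ a : Fin n, (R a μ x * ρ a ν x + R a ν x * ρ a μ x) = 0)
    -- (C6)
    (hC6 : ∀ a b μ x,
      (∑ lam : Fin m, (ρ a lam x * pd lam (R b μ) x - R b lam x * pd lam (ρ a μ) x))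
        - (∑ c : Fin n, ρ c μ x * C a b c x) - (∑ c : Fin n, R c μ x * f c a b x) = 0)
    -- (C7)
    (hC7 : ∀ a b c d x,
      alt2 (fun a' b' => ∑ lam : Fin m, ρ a' lam x * pd lam (C b' c d) x) a b
        + alt2 (fun c' d' => ∑ lam : Fin m, R c' lam x * pd lam (f a b d') x) c d
        + 2 * alt2 (fun a' b' =>
            alt2 (fun c' d' => ∑ e : Fin n, f e a' c' x * C b' d' e x) c d) a b
        - (2 : ℝ)⁻¹ * (∑ e : Fin n, f a b e x * C e c d x)
        - (2 : ℝ)⁻¹ * (∑ e : Fin n, ψ e a b x * φ e c d x) = 0)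
    -- (C8)
    (hC8 : ∀ a b c d x,
      alt4 (fun a' b' c' d' =>
        (3 : ℝ)⁻¹ * (∑ lam : Fin m, R d' lam x * pd lam (φ a' b' c') x)
          + (2 : ℝ)⁻¹ * (∑ e : Fin n, φ e a' b' x * C e c' d' x)) a b c d = 0)
    -- (C9)
    (hC9 : ∀ a b c d x,
      alt4 (fun a' b' c' d' =>
        (3 : ℝ)⁻¹ * (∑ lam : Fin m, ρ d' lam x * pd lam (ψ a' b' c') x)
          + (2 : ℝ)⁻¹ * (∑ e : Fin n, ψ e a' b' x * f c' d' e x)) a b c d = 0) :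
    -- deformed Jacobi identity for π^{μν} := Σ_a R^{a|μ} ρ_a^ν
    ∀ lam μ ν x,
      ∑ r : Fin m,
        ((∑ a : Fin n, R a r x * ρ a lam x)
            * pd r (fun y => ∑ a : Fin n, R a μ y * ρ a ν y) x
          + (∑ a : Fin n, R a r x * ρ a μ x)
            * pd r (fun y => ∑ a : Fin n, R a ν y * ρ a lam y) x
          + (∑ a : Fin n, R a r x * ρ a ν x)
            * pd r (fun y => ∑ a : Fin n, R a lam y * ρ a μ y) x)
      = ∑ a : Fin n, ∑ b : Fin n, ∑ c : Fin n,
          (ψ a b c x * R a lam x * R b μ x * R c ν x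
            + φ a b c x * ρ a lam x * ρ b μ x * ρ c ν x) := by
  intro lam μ ν x
  have dρ : ∀ a μ, DifferentiableAt ℝ (ρ a μ) x := fun a μ =>
    (hρ a μ).differentiable (by simp) x
  have dR : ∀ a μ, DifferentiableAt ℝ (R a μ) x := fun a μ =>
    (hR a μ).differentiable (by simp) x
  have hpd : ∀ r μ ν, pd r (fun y => ∑ a : Fin n, R a μ y * ρ a ν y) x
      = ∑ a, (pd r (R a μ) x * ρ a ν x + R a μ x * pd r (ρ a ν) x) := by
    intro r μ ν
    unfold pd
    rw [fderiv_fun_sum fun a _ => (dR a μ).fun_mul (dρ a ν)]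
    rw [ContinuousLinearMap.sum_apply]
    refine Finset.sum_congr rfl fun a _ => ?_
    rw [fderiv_fun_mul (dR a μ) (dρ a ν)]
    simp
    ring
  have h5 : ∀ μ ν y, ∑ a : Fin n, R a μ y * ρ a ν y = - ∑ a : Fin n, R a ν y * ρ a μ y := by
    intro μ ν y
    have := hC5 μ ν y
    rw [Finset.sum_add_distrib] at this
    linarith
  simp only [hpd]
  refine plb_alg (fun a μ => ρ a μ x) (fun a μ => R a μ x) (fun r a μ => pd r (ρ a μ) x)
    (fun r a μ => pd r (R a μ) x) (fun a b c => f a b c x) (fun a b c => C a b c x)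
    (fun a b c => φ a b c x) (fun a b c => ψ a b c x) (fun a b c => hfanti a b c x)
    (fun a b c => hCanti a b c x) (fun a b c => hφanti₁ a b c x) (fun a b c => hφanti₂ a b c x)
    (fun a b c => hψanti₁ a b c x) (fun a b c => hψanti₂ a b c x)
    (fun a b μ => hC1 a b μ x) (fun a b μ => hC3 a b μ x) ?_ ?_ (fun a b μ => hC6 a b μ x) lam μ ν
  · intro μ ν
    rw [h5 μ ν x]
    simp only [mul_comm]
  · intro r μ ν
    show ∑ a, (pd r (R a μ) x * ρ a ν x + R a μ x * pd r (ρ a ν) x)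
      = - ∑ a, (pd r (R a ν) x * ρ a μ x + R a ν x * pd r (ρ a μ) x)
    rw [← hpd, ← hpd, show (fun y => ∑ a : Fin n, R a μ y * ρ a ν y)
      = fun y => - ∑ a : Fin n, R a ν y * ρ a μ y from funext (h5 μ ν)]
    unfold pd
    rw [fderiv_fun_neg]
    simp
end
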